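/- arXiv:1412.3181 — 2 statements merged into one kernel-verified Lean document; each statement's English description precedes it below -/
import Mathlib

section
/- For every natural number m and elements x, y of a commutative ring, (x+y)^{s(m)} = \sum_{k=0}^{m, s(k)+s(m-k)=s(m)} x^{s(k)} y^{s(m-k)}, where the sum ranges over all natural numbers k with 0 \le k \le m such that s(k) + s(m-k) = s(m). -/
/-- `s k` is the sum of the binary digits of `k`. -/
def s (k : ℕ) : ℕ := (Nat.digits 2 k).sum

lemma s_even (n : ℕ) : s (2 * n) = s n := by
  rcases Nat.eq_zero_or_pos n with rfl | h
  · simp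
  · unfold s
    rw [Nat.digits_def' (by norm_num) (by omega)]
    simp

lemma s_odd (n : ℕ) : s (2 * n + 1) = s n + 1 := by
  unfold s
  rw [Nat.digits_def' (by norm_num) (by omega)]
  have h1 : (2 * n + 1) % 2 = 1 := by omega
  have h2 : (2 * n + 1) / 2 = n := by omega
  rw [h1, h2]
  simp [add_comm]

lemma s_succ_le (n : ℕ) : s (n + 1) ≤ s n + 1 := by
  induction n using Nat.strong_induction_on with
  | _ n ih =>
    rcases Nat.even_or_odd' n with ⟨a, rfl | rfl⟩
    · rw [s_odd, s_even]
    · rw [show 2 * a + 1 + 1 = 2 * (a + 1) by ring, s_odd, s_even]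
      have := ih a (by omega)
      omega

lemma s_add_le (n : ℕ) : ∀ a b, a + b = n → s n ≤ s a + s b := by
  induction n using Nat.strong_induction_on with
  | _ n ih =>
    intro a b hab
    rcases Nat.eq_zero_or_pos n with rfl | hn
    · simp [s]
    rcases Nat.even_or_odd' a with ⟨c, rfl | rfl⟩ <;>
      rcases Nat.even_or_odd' b with ⟨d, rfl | rfl⟩
    · have := ih (c + d) (by omega) c d rfl
      rw [← hab, show 2 * c + 2 * d = 2 * (c + d) by ring]
      simp only [s_even, s_odd]
      omega
    · have := ih (c + d) (by omega) c d rfl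
      rw [← hab, show 2 * c + (2 * d + 1) = 2 * (c + d) + 1 by ring]
      simp only [s_even, s_odd]
      omega
    · have := ih (c + d) (by omega) c d rfl
      rw [← hab, show 2 * c + 1 + 2 * d = 2 * (c + d) + 1 by ring]
      simp only [s_even, s_odd]
      omega
    · have := ih (c + d) (by omega) c d rfl
      have h2 := s_succ_le (c + d)
      rw [← hab, show 2 * c + 1 + (2 * d + 1) = 2 * (c + d + 1) by ring]
      simp only [s_even, s_odd]
      omega

lemma sum_range_two_mul {R : Type*} [CommRing R] (f : ℕ → R) (n : ℕ) :
    ∑ k ∈ Finset.range (2 * n), f k =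
      ∑ j ∈ Finset.range n, f (2 * j) + ∑ j ∈ Finset.range n, f (2 * j + 1) := by
  induction n with
  | zero => simp
  | succ n ih =>
    rw [show 2 * (n + 1) = 2 * n + 1 + 1 by ring]
    simp only [Finset.sum_range_succ, ih]
    ring

/-- **Digital Binomial Theorem** (sum-of-digits additivity form): for a natural
number `m` and elements `x, y` of a commutative ring,
`(x+y)^{s(m)} = ∑ x^{s(k)} y^{s(m-k)}`, the sum over `0 ≤ k ≤ m` with
`s(k) + s(m-k) = s(m)`. -/
theorem digital_binomial_digit_additive {R : Type*} [CommRing R] (m : ℕ) (x y : R) :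
    (x + y) ^ s m =
      ∑ k ∈ (Finset.range (m + 1)).filter (fun k => s k + s (m - k) = s m),
        x ^ s k * y ^ s (m - k) := by
  rw [Finset.sum_filter]
  induction m using Nat.strong_induction_on with
  | _ m ih =>
    rcases Nat.even_or_odd' m with ⟨n, rfl | rfl⟩
    · rcases Nat.eq_zero_or_pos n with rfl | hn
      · simp [s]
      rw [Finset.sum_range_succ, sum_range_two_mul, add_right_comm, s_even, ih n (by omega),
        Finset.sum_range_succ]
      have hodd : ∀ j ∈ Finset.range n,
          (if s (2 * j + 1) + s (2 * n - (2 * j + 1)) = s n then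
            x ^ s (2 * j + 1) * y ^ s (2 * n - (2 * j + 1)) else 0) = 0 := by
        intro j hj
        rw [Finset.mem_range] at hj
        rw [if_neg]
        rw [show 2 * n - (2 * j + 1) = 2 * (n - 1 - j) + 1 by omega, s_odd, s_odd]
        have h1 := s_add_le (n - 1) j (n - 1 - j) (by omega)
        have h2 := s_succ_le (n - 1)
        rw [show n - 1 + 1 = n by omega] at h2
        omega
      rw [Finset.sum_eq_zero hodd, add_zero]
      simp only [← Nat.mul_sub, s_even]
    · rw [show 2 * n + 1 + 1 = 2 * (n + 1) by ring, sum_range_two_mul, s_odd, pow_succ,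
        ih n (by omega), mul_add, add_comm, Finset.sum_mul, Finset.sum_mul]
      congr 1 <;> refine Finset.sum_congr rfl fun j hj => ?_
      · rw [Finset.mem_range] at hj
        rw [show 2 * n + 1 - 2 * j = 2 * (n - j) + 1 by omega, s_odd, s_even,
          ← add_assoc, ite_mul, zero_mul]
        simp only [add_left_inj, pow_succ, mul_assoc]
      · rw [Finset.mem_range] at hj
        rw [show 2 * n + 1 - (2 * j + 1) = 2 * (n - j) by omega, s_odd, s_even,
          add_right_comm, ite_mul, zero_mul]
        simp only [add_left_inj, pow_succ]
        congr 1
        ring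
end

section
/- Let R be a commutative ring and x \in R. For each natural number n \ge 1, define the 2^n \times 2^n matrix S_n(x) recursively by S_1(x) = [[1, 0], [x, 1]] and S_{n+1}(x) = S_1(x) \otimes S_n(x) (Kronecker product, with rows and columns of the product indexed by Fin 2 \times Fin 2^n and reindexed to Fin 2^{n+1} via the equivalence sending (a, b) to a \cdot 2^n + b). Then for all indices 0 \le j, k \le 2^n - 1, the (j, k) entry of S_n(x) equals x^{s(j-k)} if k \le j and s(k) + s(j-k) = s(j) (i.e., the pair (k, j-k) is carry-free), and equals 0 otherwise. -/
open Matrix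

/-- The equivalence `Fin 2 × Fin (2^n) ≃ Fin (2^(n+1))` sending `(a, b)` to
`a * 2^n + b`. -/
def splitEquiv (n : ℕ) : Fin 2 × Fin (2 ^ n) ≃ Fin (2 ^ (n + 1)) :=
  (finProdFinEquiv.trans (finCongr (by rw [pow_succ, Nat.mul_comm])))

/-- The Sierpinski matrices: `sierpinskiMat x 0` is the `1 × 1` identity matrix,
`sierpinskiMat x 1 = [[1, 0], [x, 1]]` (up to reindexing), and
`sierpinskiMat x (n+1) = S₁(x) ⊗ sierpinskiMat x n` (Kronecker product), with
rows and columns reindexed from `Fin 2 × Fin (2^n)` to `Fin (2^(n+1))` via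
`(a, b) ↦ a * 2^n + b`. -/
def sierpinskiMat {R : Type*} [CommRing R] (x : R) : (n : ℕ) → Matrix (Fin (2 ^ n)) (Fin (2 ^ n)) R
  | 0 => 1
  | n + 1 =>
    Matrix.reindex (splitEquiv n) (splitEquiv n)
      (Matrix.kroneckerMap (· * ·) !![1, 0; x, 1] (sierpinskiMat x n))

theorem s_zero : s 0 = 0 := by simp [s]

theorem s_two_mul_add (m r : ℕ) (hr : r < 2) : s (2 * m + r) = s m + r := by
  by_cases h : m = 0 ∧ r = 0
  · obtain ⟨rfl, rfl⟩ := h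
    simp [s]
  · unfold s
    rw [Nat.add_comm (2 * m) r, Nat.digits_add 2 (by norm_num) r m hr (by omega)]
    simp [Nat.add_comm]

theorem s_one : s 1 = 1 := by simp [s]

theorem s_step (m : ℕ) : s m = s (m / 2) + m % 2 := by
  have h := s_two_mul_add (m / 2) (m % 2) (Nat.mod_lt _ (by norm_num))
  rwa [Nat.div_add_mod] at h

theorem s_pow_mul_add (n : ℕ) : ∀ a b : ℕ, b < 2 ^ n → s (b + 2 ^ n * a) = s a + s b := by
  induction n with
  | zero =>
    intro a b hb
    have : b = 0 := by simpa using hb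
    subst this
    simp [s_zero]
  | succ n ih =>
    intro a b hb
    have hb2 : b / 2 < 2 ^ n := by rw [pow_succ] at hb; omega
    have e : b + 2 ^ (n + 1) * a = 2 * (b / 2 + 2 ^ n * a) + b % 2 := by
      have := Nat.div_add_mod b 2
      rw [pow_succ]
      linarith
    rw [e, s_two_mul_add _ _ (Nat.mod_lt _ (by norm_num)), ih a _ hb2, s_step b]
    ring

theorem s_add_le_s9 : ∀ N d e : ℕ, d + e ≤ N → s (d + e) ≤ s d + s e := by
  intro N
  induction N with
  | zero =>
    intro d e h
    have h1 : d = 0 := by omega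
    have h2 : e = 0 := by omega
    subst h1; subst h2; simp [s_zero]
  | succ N ih =>
    intro d e h
    have hd := s_step d
    have he := s_step e
    have hde := s_step (d + e)
    by_cases hc : d % 2 = 1 ∧ e % 2 = 1
    · have e1 : (d + e) / 2 = (d / 2 + e / 2) + 1 := by omega
      rw [e1] at hde
      by_cases h1 : d = 1 ∧ e = 1
      · obtain ⟨rfl, rfl⟩ := h1
        simp [s]
      · have i1 := ih (d / 2 + e / 2) 1 (by omega)
        have i2 := ih (d / 2) (e / 2) (by omega)
        rw [s_one] at i1
        omega
    · have e1 : (d + e) / 2 = d / 2 + e / 2 := by omega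
      rw [e1] at hde
      by_cases h0 : d + e = 0
      · have h1 : d = 0 := by omega
        have h2 : e = 0 := by omega
        subst h1; subst h2; simp [s_zero]
      · have i2 := ih (d / 2) (e / 2) (by omega)
        omega

theorem s_add_lt (n : ℕ) : ∀ d e : ℕ, d < 2 ^ n → e < 2 ^ n → 2 ^ n ≤ d + e →
    s (d + e) < s d + s e := by
  induction n with
  | zero => intro d e hd he h; simp at hd he h; omega
  | succ n ih =>
    intro d e hd he h
    rw [pow_succ] at hd he h
    have sd := s_step d
    have se := s_step e
    have sde := s_step (d + e)
    by_cases hc : d % 2 = 1 ∧ e % 2 = 1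
    · have e1 : (d + e) / 2 = (d / 2 + e / 2) + 1 := by omega
      rw [e1] at sde
      have i1 := s_add_le_s9 _ (d / 2 + e / 2) 1 le_rfl
      have i2 := s_add_le_s9 _ (d / 2) (e / 2) le_rfl
      rw [s_one] at i1
      omega
    · have e1 : (d + e) / 2 = d / 2 + e / 2 := by omega
      rw [e1] at sde
      have i2 := ih (d / 2) (e / 2) (by omega) (by omega) (by omega)
      omega

theorem splitEquiv_val (n : ℕ) (a : Fin 2) (b : Fin (2 ^ n)) :
    (splitEquiv n (a, b) : ℕ) = b + 2 ^ n * a := by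
  simp [splitEquiv]

theorem sierpinski_aux {R : Type*} [CommRing R] (x : R) (n : ℕ) : ∀ j k : Fin (2 ^ n),
    sierpinskiMat x n j k =
      if (k : ℕ) ≤ (j : ℕ) ∧ s (k : ℕ) + s ((j : ℕ) - (k : ℕ)) = s (j : ℕ) then
        x ^ s ((j : ℕ) - (k : ℕ))
      else 0 := by
  induction n with
  | zero =>
    intro j k
    have hj : (j : ℕ) = 0 := by have := j.2; simpa using this
    have hk : (k : ℕ) = 0 := by have := k.2; simpa using this
    have hjk : j = k := Fin.ext (by omega)
    subst hjk
    simp [sierpinskiMat, s_zero]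
  | succ n ih =>
    intro j k
    obtain ⟨⟨a, b⟩, rfl⟩ := (splitEquiv n).surjective j
    obtain ⟨⟨c, d⟩, rfl⟩ := (splitEquiv n).surjective k
    have hrec : sierpinskiMat x (n + 1) (splitEquiv n (a, b)) (splitEquiv n (c, d)) =
        (!![1, 0; x, 1] : Matrix (Fin 2) (Fin 2) R) a c * sierpinskiMat x n b d := by
      simp [sierpinskiMat]
    rw [hrec, ih, splitEquiv_val, splitEquiv_val]
    have hb := b.2
    have hd := d.2
    generalize (b : ℕ) = b at *
    generalize (d : ℕ) = d at *
    have h1b := s_pow_mul_add n 1 b hb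
    have h1d := s_pow_mul_add n 1 d hd
    rw [s_one, mul_one] at h1b h1d
    fin_cases a <;> fin_cases c
    · simp
    · have : ¬ (d + 2 ^ n ≤ b) := by omega
      simp [this]
    · by_cases hle : d ≤ b
      · have e1 : b + 2 ^ n - d = (b - d) + 2 ^ n := by omega
        have h1 := s_pow_mul_add n 1 (b - d) (by omega)
        rw [s_one, mul_one] at h1
        have h2 : d ≤ b + 2 ^ n := by omega
        have h3 : (s d + (1 + s (b - d)) = 1 + s b) ↔ (s d + s (b - d) = s b) := by omega
        simp [e1, h1, h1b, hle, h2, h3, pow_add]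
      · have h1 := s_add_lt n d (b + 2 ^ n - d) hd (by omega) (by omega)
        have e1 : d + (b + 2 ^ n - d) = b + 2 ^ n := by omega
        rw [e1] at h1
        have h2 : ¬ (s d + s (b + 2 ^ n - d) = s (b + 2 ^ n)) := by omega
        simp [hle, h2]
    · have h3 : (1 + s d + s (b - d) = 1 + s b) ↔ (s d + s (b - d) = s b) := by omega
      have e1 : b + 2 ^ n - (d + 2 ^ n) = b - d := by omega
      simp [h1b, h1d, h3, e1]

/-- For `n ≥ 1`, the `(j, k)` entry of `Sₙ(x)` equals `x^{s(j-k)}` if `k ≤ j`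
and the pair `(k, j-k)` is carry-free (i.e. `s(k) + s(j-k) = s(j)`), and equals
`0` otherwise. -/
theorem sierpinskiMat_entries {R : Type*} [CommRing R] (x : R) (n : ℕ) (hn : 1 ≤ n)
    (j k : Fin (2 ^ n)) :
    sierpinskiMat x n j k =
      if (k : ℕ) ≤ (j : ℕ) ∧ s (k : ℕ) + s ((j : ℕ) - (k : ℕ)) = s (j : ℕ) then
        x ^ s ((j : ℕ) - (k : ℕ))
      else 0 := by
  exact sierpinski_aux x n j k
end
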